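/- The following integral identity holds: ∫₀^{1/2} ∫_b^{√((1−b²)/3)} ( a²/(1 + a² − b²) − 3(a² − b²)/2 − 2 + 2√(1 + a² − b²) ) / √(1 − a² − b²) da db = 7√2/12 − 1 − arctan(√2) + π/4 + 2 ∫₀^{1/2} ∫_b^{√((1−b²)/3)} √(1 + a² − b²) / √(1 − a² − b²) da db. -/

import Mathlib

/-!
Only the part of the integrand free of `√(1 + a² - b²)` has to be evaluated, and it has elementary
antiderivatives in both variables. With `r = √(1 - a² - b²)`, an antiderivative in `a` is
`(9b² - 7)/4 · arctan (a/r) + 3/4 · a r - arctan (√2 a/r)/√2` (`hasDerivAt_inner`).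
At the upper limit `3a² + b² = 1` one has `a/r = 1/√2`, so both arctangents are constant there
(`inner_integral`). The remaining function of `b` is integrated by parts; with `s = √(1 - 2b²)`
its antiderivative is `outerPrim` (`hasDerivAt_outer`), and evaluating at `0` and `1/2` gives
the constant.

On the region of integration `1 - a² - b² ≥ 1/2`, so every integrand is continuous; the
integrability in `b` of the inner integral of the remaining part follows from continuity of parametric
integrals after truncating the denominator from below (`innerRest_continuous`).
-/

open Real

noncomputable section

lemma hasDerivAt_radius {a b : ℝ} (h : 0 < 1 - a ^ 2 - b ^ 2) :
    HasDerivAt (fun x : ℝ => √(1 - x ^ 2 - b ^ 2)) (-a / √(1 - a ^ 2 - b ^ 2)) a := by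
  have h1 : HasDerivAt (fun x : ℝ => 1 - x ^ 2 - b ^ 2) (-(2 * a)) a := by
    have := (((hasDerivAt_id a).pow 2).const_sub 1).sub_const (b ^ 2)
    simpa using this
  refine (h1.sqrt h.ne').congr_deriv ?_
  have : √(1 - a ^ 2 - b ^ 2) ≠ 0 := (sqrt_pos.2 h).ne'
  field_simp

lemma hasDerivAt_arctan_div {k a r' : ℝ} {r : ℝ → ℝ} (hr : HasDerivAt r r' a) (h : 0 < r a) :
    HasDerivAt (fun x => arctan (k * x / r x))
      (k * (r a - a * r') / (r a ^ 2 + k ^ 2 * a ^ 2)) a := by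
  have h1 := (((hasDerivAt_id a).const_mul k).div hr h.ne').arctan
  refine h1.congr_deriv ?_
  have h2 : r a ^ 2 + k ^ 2 * a ^ 2 ≠ 0 := by positivity
  have h3 : 1 + (k * a / r a) ^ 2 = (r a ^ 2 + k ^ 2 * a ^ 2) / r a ^ 2 := by
    field_simp
  simp only [id, Pi.div_apply]
  rw [h3]
  field_simp

/-- Antiderivative in `a` of the part of the integrand free of `√(1 + a² - b²)`. -/
def innerPrim (b a : ℝ) : ℝ :=
  (9 * b ^ 2 - 7) / 4 * arctan (1 * a / √(1 - a ^ 2 - b ^ 2)) +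
    3 / 4 * (a * √(1 - a ^ 2 - b ^ 2)) -
    1 / √2 * arctan (√2 * a / √(1 - a ^ 2 - b ^ 2))

lemma hasDerivAt_inner {a b : ℝ} (h : 0 < 1 - a ^ 2 - b ^ 2) :
    HasDerivAt (innerPrim b)
      ((a ^ 2 / (1 + a ^ 2 - b ^ 2) - 3 * (a ^ 2 - b ^ 2) / 2 - 2) / √(1 - a ^ 2 - b ^ 2)) a := by
  have hr := hasDerivAt_radius h
  have hpos := sqrt_pos.2 h
  have h1 := (((hasDerivAt_arctan_div (k := 1) hr hpos).const_mul ((9 * b ^ 2 - 7) / 4)).add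
    (((hasDerivAt_id a).mul hr).const_mul (3 / 4))).sub
    ((hasDerivAt_arctan_div (k := √2) hr hpos).const_mul (1 / √2))
  refine h1.congr_deriv ?_
  have hsq : √(1 - a ^ 2 - b ^ 2) ^ 2 = 1 - a ^ 2 - b ^ 2 := sq_sqrt h.le
  have h2 : √2 ^ 2 = 2 := sq_sqrt (by norm_num)
  have h20 : √2 ≠ 0 := by positivity
  simp only [id]
  generalize √(1 - a ^ 2 - b ^ 2) = r at *
  have hb : b ^ 2 = 1 - a ^ 2 - r ^ 2 := by linarith
  rw [h2, hb]
  have e1 : 1 + a ^ 2 - (1 - a ^ 2 - r ^ 2) = r ^ 2 + 2 * a ^ 2 := by ring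
  have hd1 : r ^ 2 + 1 ^ 2 * a ^ 2 ≠ 0 := by positivity
  have hd1' : r ^ 2 + a ^ 2 ≠ 0 := by positivity
  have hd2 : r ^ 2 + 2 * a ^ 2 ≠ 0 := by positivity
  rw [e1]
  field_simp
  ring

lemma upper_sq {b : ℝ} (h1 : b ≤ 1 / 2) (h0 : 0 ≤ b) :
    √((1 - b ^ 2) / 3) ^ 2 = (1 - b ^ 2) / 3 :=
  sq_sqrt (by nlinarith)

lemma le_upper {b : ℝ} (h1 : b ≤ 1 / 2) (h0 : 0 ≤ b) : b ≤ √((1 - b ^ 2) / 3) :=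
  le_sqrt_of_sq_le (by nlinarith)

lemma region_bound {a b : ℝ} (h1 : b ≤ 1 / 2) (h0 : 0 ≤ b)
    (ha : a ∈ Set.uIcc b √((1 - b ^ 2) / 3)) :
    1 / 2 ≤ 1 - a ^ 2 - b ^ 2 ∧ b ^ 2 ≤ a ^ 2 := by
  rw [Set.uIcc_of_le (le_upper h1 h0)] at ha
  have h2 := upper_sq h1 h0
  have h3 : a ^ 2 ≤ √((1 - b ^ 2) / 3) ^ 2 := pow_le_pow_left₀ (h0.trans ha.1) ha.2 2
  have h4 : b ^ 2 ≤ a ^ 2 := pow_le_pow_left₀ h0 ha.1 2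
  constructor <;> nlinarith

lemma continuousOn_elementary {b : ℝ} (h1 : b ≤ 1 / 2) (h0 : 0 ≤ b) :
    ContinuousOn (fun a : ℝ =>
      (a ^ 2 / (1 + a ^ 2 - b ^ 2) - 3 * (a ^ 2 - b ^ 2) / 2 - 2) / √(1 - a ^ 2 - b ^ 2))
      (Set.uIcc b √((1 - b ^ 2) / 3)) := by
  refine ContinuousOn.div (ContinuousOn.sub (ContinuousOn.sub
    (ContinuousOn.div (by fun_prop) (by fun_prop) ?_) (by fun_prop)) (by fun_prop))
    (by fun_prop) ?_
  · intro a ha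
    have := region_bound h1 h0 ha
    linarith
  · intro a ha
    have := region_bound h1 h0 ha
    exact (sqrt_pos.2 (by linarith)).ne'

lemma continuousOn_rest {b : ℝ} (h1 : b ≤ 1 / 2) (h0 : 0 ≤ b) :
    ContinuousOn (fun a : ℝ => √(1 + a ^ 2 - b ^ 2) / √(1 - a ^ 2 - b ^ 2))
      (Set.uIcc b √((1 - b ^ 2) / 3)) := by
  refine ContinuousOn.div (by fun_prop) (by fun_prop) ?_
  intro a ha
  have := region_bound h1 h0 ha
  exact (sqrt_pos.2 (by linarith)).ne'

/-- The value of the inner integral of the part free of `√(1 + a² - b²)`. -/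
def innerVal (b : ℝ) : ℝ :=
  (9 * b ^ 2 - 7) / 4 * (arctan (1 / √2) - arctan (1 * b / √(1 - b ^ 2 - b ^ 2))) +
    √2 / 4 * (1 - b ^ 2) - 3 / 4 * (b * √(1 - b ^ 2 - b ^ 2)) -
    1 / √2 * (π / 4 - arctan (√2 * b / √(1 - b ^ 2 - b ^ 2)))

lemma inner_integral {b : ℝ} (h1 : b ≤ 1 / 2) (h0 : 0 ≤ b) :
    ∫ a in b..√((1 - b ^ 2) / 3),
      (a ^ 2 / (1 + a ^ 2 - b ^ 2) - 3 * (a ^ 2 - b ^ 2) / 2 - 2) / √(1 - a ^ 2 - b ^ 2)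
      = innerVal b := by
  rw [intervalIntegral.integral_eq_sub_of_hasDerivAt
    (fun a ha => hasDerivAt_inner (by linarith [(region_bound h1 h0 ha).1]))
    (continuousOn_elementary h1 h0).intervalIntegrable]
  -- at the upper limit `u` the radius is `√2 u`
  have hu := upper_sq h1 h0
  have hupos : 0 < √((1 - b ^ 2) / 3) := sqrt_pos.2 (by nlinarith)
  have h2 : √2 ^ 2 = 2 := sq_sqrt (by norm_num)
  have h20 : √2 ≠ 0 := by positivity
  unfold innerPrim innerVal
  generalize √((1 - b ^ 2) / 3) = u at *
  have hr : √(1 - u ^ 2 - b ^ 2) = √2 * u := by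
    rw [sqrt_eq_iff_mul_self_eq_of_pos (by positivity)]
    nlinarith
  rw [hr]
  have e1 : 1 * u / (√2 * u) = 1 / √2 := by field_simp
  have e2 : √2 * u / (√2 * u) = 1 := by field_simp
  have e3 : u * (√2 * u) = √2 * ((1 - b ^ 2) / 3) := by rw [← hu]; ring
  rw [e1, e2, e3, arctan_one]
  ring

lemma hasDerivAt_diag {b : ℝ} (h : 0 < 1 - b ^ 2 - b ^ 2) :
    HasDerivAt (fun x : ℝ => √(1 - x ^ 2 - x ^ 2)) (-(2 * b) / √(1 - b ^ 2 - b ^ 2)) b := by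
  have h1 : HasDerivAt (fun x : ℝ => 1 - x ^ 2 - x ^ 2) (-(2 * b) - 2 * b) b := by
    refine ((((hasDerivAt_id b).pow 2).const_sub 1).sub ((hasDerivAt_id b).pow 2)).congr_deriv ?_
    simp
  refine (h1.sqrt h.ne').congr_deriv ?_
  have : √(1 - b ^ 2 - b ^ 2) ≠ 0 := (sqrt_pos.2 h).ne'
  field_simp
  ring

/-- Antiderivative of `innerVal`. -/
def outerPrim (b : ℝ) : ℝ :=
  (3 * b ^ 3 - 7 * b) / 4 * (arctan (1 / √2) - arctan (1 * b / √(1 - b ^ 2 - b ^ 2))) +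
    7 / 8 * √(1 - b ^ 2 - b ^ 2) + arctan √(1 - b ^ 2 - b ^ 2) +
    1 / 8 * √(1 - b ^ 2 - b ^ 2) ^ 3 + √2 / 4 * (b - b ^ 3 / 3) -
    1 / √2 * (π / 4 * b - b * arctan (√2 * b / √(1 - b ^ 2 - b ^ 2)))

lemma hasDerivAt_outer {b : ℝ} (h : 0 < 1 - b ^ 2 - b ^ 2) :
    HasDerivAt outerPrim (innerVal b) b := by
  have hs := hasDerivAt_diag h
  have hpos := sqrt_pos.2 h
  have hA := hasDerivAt_arctan_div (k := 1) hs hpos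
  have hB := hasDerivAt_arctan_div (k := √2) hs hpos
  have hid := hasDerivAt_id b
  have hp : HasDerivAt (fun x : ℝ => (3 * x ^ 3 - 7 * x) / 4) ((9 * b ^ 2 - 7) / 4) b := by
    refine ((((hid.pow 3).const_mul 3).sub (hid.const_mul 7)).div_const 4).congr_deriv ?_
    simp; ring
  have hq : HasDerivAt (fun x : ℝ => x - x ^ 3 / 3) (1 - b ^ 2) b := by
    refine (hid.sub ((hid.pow 3).div_const 3)).congr_deriv ?_
    simp
  have h1 := (((((hp.mul (hA.const_sub (arctan (1 / √2)))).add (hs.const_mul (7 / 8))).add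
    hs.arctan).add ((hs.pow 3).const_mul (1 / 8))).add (hq.const_mul (√2 / 4))).sub
    (((hid.const_mul (π / 4)).sub (hid.mul hB)).const_mul (1 / √2))
  refine h1.congr_deriv ?_
  have hsq : √(1 - b ^ 2 - b ^ 2) ^ 2 = 1 - b ^ 2 - b ^ 2 := sq_sqrt h.le
  have h2 : √2 ^ 2 = 2 := sq_sqrt (by norm_num)
  have h20 : √2 ≠ 0 := by positivity
  unfold innerVal
  simp only [id]
  generalize √(1 - b ^ 2 - b ^ 2) = s at *
  generalize arctan (1 * b / s) = A
  generalize arctan (√2 * b / s) = B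
  generalize arctan (1 / √2) = α
  -- denominators expressed through `s² = 1 - 2b²`
  have d1 : s ^ 2 + 1 ^ 2 * b ^ 2 = 1 - b ^ 2 := by rw [hsq]; ring
  have d2 : s ^ 2 + √2 ^ 2 * b ^ 2 = 1 := by rw [hsq, h2]; ring
  have d3 : 1 + s ^ 2 = 2 * (1 - b ^ 2) := by rw [hsq]; ring
  have hd : 1 - b ^ 2 ≠ 0 := by nlinarith [sq_nonneg b]
  have n1 : s - b * (-(2 * b) / s) = 1 / s := by
    field_simp
    linarith
  rw [d1, d2, d3, n1]
  push_cast
  field_simp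
  ring

lemma innerVal_continuousOn : ContinuousOn innerVal (Set.uIcc 0 (1 / 2)) := by
  have hpos : ∀ b ∈ Set.uIcc (0:ℝ) (1 / 2), √(1 - b ^ 2 - b ^ 2) ≠ 0 := by
    intro b hb
    rw [Set.uIcc_of_le (by norm_num)] at hb
    exact (sqrt_pos.2 (by nlinarith [hb.1, hb.2])).ne'
  have hA (k : ℝ) : ContinuousOn (fun b : ℝ => arctan (k * b / √(1 - b ^ 2 - b ^ 2)))
      (Set.uIcc 0 (1 / 2)) :=
    continuous_arctan.comp_continuousOn (ContinuousOn.div (by fun_prop) (by fun_prop) hpos)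
  have h1 := hA 1
  have h2 := hA √2
  unfold innerVal
  fun_prop

lemma outer_integral : ∫ b in (0:ℝ)..(1/2), innerVal b
    = 7 * √2 / 12 - 1 - arctan √2 + π / 4 := by
  have hder : ∀ b ∈ Set.uIcc (0:ℝ) (1 / 2), HasDerivAt outerPrim (innerVal b) b := by
    intro b hb
    rw [Set.uIcc_of_le (by norm_num)] at hb
    exact hasDerivAt_outer (by nlinarith [hb.1, hb.2])
  rw [intervalIntegral.integral_eq_sub_of_hasDerivAt hder
    innerVal_continuousOn.intervalIntegrable]
  have h2 : √2 ^ 2 = 2 := sq_sqrt (by norm_num)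
  have h20 : √2 ≠ 0 := by positivity
  have hs : √(1 - (1 / 2 : ℝ) ^ 2 - (1 / 2) ^ 2) = √2 / 2 := by
    rw [sqrt_eq_iff_mul_self_eq_of_pos (by positivity)]
    nlinarith
  have e1 : 1 * (1 / 2) / (√2 / 2) = 1 / √2 := by field_simp
  have e2 : √2 * (1 / 2) / (√2 / 2) = 1 := by field_simp
  have e3 : √2 / 2 = (√2)⁻¹ := by
    field_simp
    exact h2
  have e4 : arctan (√2 / 2) = π / 2 - arctan √2 := by
    rw [e3, arctan_inv_of_pos (by positivity)]
  have e5 : (√2 / 2) ^ 3 = √2 / 4 := by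
    rw [div_pow, pow_succ, h2]
    ring
  have hz : outerPrim 0 = 1 + π / 4 := by
    simp [outerPrim]
    ring
  rw [hz, outerPrim, hs, e1, e2, e4, e5, arctan_one]
  ring

/-- Inner integral of the part containing `√(1 + a² - b²)`, with `1 - a² - b²` truncated below
by `1/2` so that the integrand is continuous on the whole plane. -/
def innerRest (b : ℝ) : ℝ :=
  ∫ a in b..√((1 - b ^ 2) / 3), √(1 + a ^ 2 - b ^ 2) / √(max (1 / 2) (1 - a ^ 2 - b ^ 2))

lemma innerRest_continuous : Continuous innerRest := by
  have hf : Continuous (Function.uncurry fun b a : ℝ =>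
      √(1 + a ^ 2 - b ^ 2) / √(max (1 / 2) (1 - a ^ 2 - b ^ 2))) := by
    unfold Function.uncurry
    refine Continuous.div (by fun_prop) (by fun_prop) ?_
    intro p
    exact (sqrt_pos.2 (lt_of_lt_of_le (by norm_num) (le_max_left _ _))).ne'
  have hfb (b : ℝ) : Continuous fun a : ℝ =>
      √(1 + a ^ 2 - b ^ 2) / √(max (1 / 2) (1 - a ^ 2 - b ^ 2)) :=
    hf.comp (Continuous.prodMk_right b)
  have h1 := intervalIntegral.continuous_parametric_intervalIntegral_of_continuous
    (μ := MeasureTheory.volume) (a₀ := 0) hf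
    (s := fun b : ℝ => √((1 - b ^ 2) / 3)) (by fun_prop)
  have h2 := intervalIntegral.continuous_parametric_intervalIntegral_of_continuous
    (μ := MeasureTheory.volume) (a₀ := 0) hf (s := fun b : ℝ => b) (by fun_prop)
  refine (h1.sub h2).congr fun b => ?_
  exact intervalIntegral.integral_interval_sub_left
    ((hfb b).intervalIntegrable _ _) ((hfb b).intervalIntegrable _ _)

lemma rest_eq {b : ℝ} (h1 : b ≤ 1 / 2) (h0 : 0 ≤ b) :
    ∫ a in b..√((1 - b ^ 2) / 3), √(1 + a ^ 2 - b ^ 2) / √(1 - a ^ 2 - b ^ 2) = innerRest b := by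
  refine intervalIntegral.integral_congr fun a ha => ?_
  rw [max_eq_right (region_bound h1 h0 ha).1]

/-- the rearrangement of the double integral `I₂` from the computation of the
volume of `U_3`. -/
theorem integral_I2_rearranged :
    (∫ b in (0:ℝ)..(1/2), ∫ a in b..(sqrt ((1 - b ^ 2) / 3)),
        (a ^ 2 / (1 + a ^ 2 - b ^ 2) - 3 * (a ^ 2 - b ^ 2) / 2 - 2 +
            2 * sqrt (1 + a ^ 2 - b ^ 2)) / sqrt (1 - a ^ 2 - b ^ 2))
      = 7 * sqrt 2 / 12 - 1 - arctan (sqrt 2) + π / 4 +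
        2 * ∫ b in (0:ℝ)..(1/2), ∫ a in b..(sqrt ((1 - b ^ 2) / 3)),
          sqrt (1 + a ^ 2 - b ^ 2) / sqrt (1 - a ^ 2 - b ^ 2) := by
  have hmem {b : ℝ} (hb : b ∈ Set.uIcc (0:ℝ) (1 / 2)) : 0 ≤ b ∧ b ≤ 1 / 2 := by
    rwa [Set.uIcc_of_le (by norm_num)] at hb
  have hR : (∫ b in (0:ℝ)..(1/2), ∫ a in b..(sqrt ((1 - b ^ 2) / 3)),
      sqrt (1 + a ^ 2 - b ^ 2) / sqrt (1 - a ^ 2 - b ^ 2))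
      = ∫ b in (0:ℝ)..(1/2), innerRest b :=
    intervalIntegral.integral_congr fun b hb => rest_eq (hmem hb).2 (hmem hb).1
  rw [hR, ← outer_integral, ← intervalIntegral.integral_const_mul,
    ← intervalIntegral.integral_add innerVal_continuousOn.intervalIntegrable
      ((innerRest_continuous.const_mul 2).intervalIntegrable _ _)]
  refine intervalIntegral.integral_congr fun b hb => ?_
  obtain ⟨h0, h1⟩ := hmem hb
  rw [← inner_integral h1 h0, ← rest_eq h1 h0, ← intervalIntegral.integral_const_mul,
    ← intervalIntegral.integral_add (continuousOn_elementary h1 h0).intervalIntegrable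
      ((continuousOn_rest h1 h0).const_mul 2).intervalIntegrable]
  refine intervalIntegral.integral_congr fun a _ => ?_
  ring
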